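/- Let r ≥ 2 and let P, Q ∈ ℂ[x₁,…,x_m] be homogeneous polynomials of degree r such that det(Hess P) is not the zero polynomial, and such that Q(∇P(w)) = P(w)^{r−1} for all w ∈ ℂ^m. Then for all y ∈ ℂ^m one has P(∇Q(y)) = Q(y)^{r−1}. -/

import Mathlib

/-!
Write `H` for the Hessian matrix of `P`. Differentiating `Q(∇P) = P^(r-1)` by the chain rule gives
`H · (∇Q ∘ ∇P) = (r-1) P^(r-2) ∇P`, while Euler's identity for the first-order partial derivatives
of `P`, which are homogeneous of degree `r - 1`, gives `H · x = (r-1) ∇P`. As `det H ≠ 0` in the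
domain `ℂ[x]`, it follows that `∇Q ∘ ∇P = P^(r-2) x` (`pderiv_comp_grad`). By homogeneity,
`P ∘ ∇Q` composed with `∇P` is then `P^(r(r-2)) P = P^((r-1)^2)`, which is also `Q^(r-1)` composed
with `∇P`. It remains to cancel `∇P`: since `det H ≠ 0`, the partial derivatives of `P` are
algebraically independent, the easy half of the Jacobian criterion in characteristic zero
(`eq_zero_of_bind₁_eq_zero`).
-/

open MvPolynomial

/-- Iterated partial derivative `∂^α P`. -/
noncomputable def iterPDeriv (m : ℕ) (α : Fin m → ℕ) :
    MvPolynomial (Fin m) ℂ → MvPolynomial (Fin m) ℂ :=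
  (List.ofFn fun i : Fin m => (fun Q => pderiv i Q)^[α i]).foldr (· ∘ ·) id

/-- Gradient map of a polynomial: `w ↦ (∂P/∂x₁(w), …, ∂P/∂x_m(w))`. -/
noncomputable def gradMap (m : ℕ) (P : MvPolynomial (Fin m) ℂ) :
    (Fin m → ℂ) → Fin m → ℂ :=
  fun w i => eval w (pderiv i P)

/-- Determinant of the Hessian matrix `(∂²P/∂xᵢ∂xⱼ)`. -/
noncomputable def hessDet (m : ℕ) (P : MvPolynomial (Fin m) ℂ) : MvPolynomial (Fin m) ℂ :=
  Matrix.det (Matrix.of fun i j : Fin m => pderiv i (pderiv j P))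

/-- Directional derivative `D_v = v₁ ∂/∂x₁ + ⋯ + v_m ∂/∂x_m`. -/
noncomputable def dirDeriv (m : ℕ) (v : Fin m → ℂ) :
    MvPolynomial (Fin m) ℂ → MvPolynomial (Fin m) ℂ :=
  fun Q => ∑ i : Fin m, v i • pderiv i Q

/-- The chain rule for substituting polynomials `g j` into a polynomial `F`. -/
lemma pderiv_bind₁ {m : ℕ} (g : Fin m → MvPolynomial (Fin m) ℂ) (F : MvPolynomial (Fin m) ℂ)
    (i : Fin m) :
    pderiv i (bind₁ g F) = ∑ j, pderiv i (g j) * bind₁ g (pderiv j F) := by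
  induction F using MvPolynomial.induction_on with
  | C a => simp
  | add p q hp hq => simp [hp, hq, mul_add, Finset.sum_add_distrib]
  | mul_X p n h =>
    simp only [map_mul, bind₁_X_right, Derivation.leibniz, smul_eq_mul, h, map_add, mul_add,
      Finset.sum_add_distrib, pderiv_X, Finset.mul_sum]
    congr 1
    · rw [Finset.sum_eq_single n]
      · simp [mul_comm]
      · intro b _ hb
        simp [Pi.single_eq_of_ne' hb]
      · simp
    · exact Finset.sum_congr rfl fun j _ => by ring

/-- Polynomials whose Jacobian determinant is nonzero are algebraically independent. The induction
is on a strict bound `n` for the degree of `F`: the chain rule shows that the partial derivatives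
of a relation `F` are again relations, of smaller degree. -/
lemma eq_zero_of_bind₁_eq_zero {m : ℕ} {g : Fin m → MvPolynomial (Fin m) ℂ}
    (hg : (Matrix.of fun i j => pderiv i (g j)).det ≠ 0) (n : ℕ) :
    ∀ F : MvPolynomial (Fin m) ℂ, (∀ s : Fin m →₀ ℕ, n ≤ s.degree → coeff s F = 0) →
      bind₁ g F = 0 → F = 0 := by
  induction n with
  | zero => exact fun F hF _ => MvPolynomial.ext _ _ fun s => by simpa using hF s (Nat.zero_le _)
  | succ n ih =>
    intro F hF h0
    have hv : (fun j => bind₁ g (pderiv j F)) = 0 := by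
      refine Matrix.eq_zero_of_mulVec_eq_zero hg (funext fun i => ?_)
      simpa [h0, Matrix.mulVec, dotProduct] using (pderiv_bind₁ g F i).symm
    have hd : ∀ j, pderiv j F = 0 := fun j => by
      refine ih _ (fun s hs => ?_) (congrFun hv j)
      rw [coeff_pderiv, hF _ (by simpa using hs), zero_mul]
    have hC : F = C (coeff 0 F) := by
      ext s
      rw [coeff_C]
      split_ifs with hs
      · rw [hs]
      · obtain ⟨j, hj⟩ : ∃ j, s j ≠ 0 := by
          by_contra! h
          exact hs (Finsupp.ext fun j => (h j).symm)
        have h1 := coeff_pderiv (i := j) F (s - Finsupp.single j 1)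
        rw [hd, Finsupp.sub_add_single_one_cancel hj, coeff_zero] at h1
        exact (mul_eq_zero.1 h1.symm).resolve_right (Nat.cast_add_one_ne_zero _)
    rw [hC] at h0 ⊢
    simpa using h0

lemma eval_smul_of_isHomogeneous {m r : ℕ} {P : MvPolynomial (Fin m) ℂ} (hP : P.IsHomogeneous r)
    (c : ℂ) (w : Fin m → ℂ) : eval (fun i => c * w i) P = c ^ r * eval w P := by
  rw [eval_eq', eval_eq', Finset.mul_sum]
  refine Finset.sum_congr rfl fun s hs => ?_
  have h : ∑ i, s i = r := by
    rw [← Finsupp.degree_eq_sum]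
    exact hP.degree_eq_sum_deg_support hs |>.symm
  simp only [mul_pow, Finset.prod_mul_distrib, Finset.prod_pow_eq_pow_sum, h]
  ring

lemma eval_bind₁ {m : ℕ} (g : Fin m → MvPolynomial (Fin m) ℂ) (F : MvPolynomial (Fin m) ℂ)
    (w : Fin m → ℂ) : eval w (bind₁ g F) = eval (fun i => eval w (g i)) F := by
  induction F using MvPolynomial.induction_on with
  | C a => simp
  | add p q hp hq => simp [hp, hq]
  | mul_X p n h => simp [h]

/-- The inversion formula `∇Q ∘ ∇P = P^(r-2) x`, here with `r = k + 2`. -/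
lemma pderiv_comp_grad {m k : ℕ} {P Q : MvPolynomial (Fin m) ℂ} (hP : P.IsHomogeneous (k + 2))
    (hHess : hessDet m P ≠ 0)
    (hLeg : bind₁ (fun i => pderiv i P) Q = P ^ (k + 1)) (j : Fin m) :
    bind₁ (fun i => pderiv i P) (pderiv j Q) = P ^ k * X j := by
  have hv : (fun j => bind₁ (fun i => pderiv i P) (pderiv j Q) - P ^ k * X j) = 0 := by
    refine Matrix.eq_zero_of_mulVec_eq_zero hHess (funext fun i => ?_)
    have h1 := pderiv_bind₁ (fun i => pderiv i P) Q i
    rw [hLeg, pderiv_pow] at h1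
    have h2 := (hP.pderiv (i := i)).sum_X_mul_pderiv
    have h3 : ∀ j, pderiv i (pderiv j P) = pderiv j (pderiv i P) := fun j =>
      MvPolynomial.ext _ _ fun s => by
        classical
        simp only [coeff_pderiv, Finsupp.add_apply, Finsupp.single_apply]
        rw [add_right_comm]
        by_cases hij : i = j
        · subst hij; ring
        · simp [hij, Ne.symm hij]; ring
    simp only [Matrix.mulVec, dotProduct, Matrix.of_apply, mul_sub, Finset.sum_sub_distrib,
      Pi.zero_apply]
    rw [← h1]
    have h4 : ∑ j, pderiv i (pderiv j P) * (P ^ k * X j)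
        = P ^ k * ∑ j, X j * pderiv j (pderiv i P) := by
      rw [Finset.mul_sum]
      exact Finset.sum_congr rfl fun j _ => by rw [h3]; ring
    rw [h4, h2]
    simp
    ring
  exact sub_eq_zero.1 (congrFun hv j)

/-- Involutivity of the multiplicative Legendre transform: if `Q(∇P(w)) = P(w)^(r-1)`
for all `w`, then `P(∇Q(y)) = Q(y)^(r-1)` for all `y`. -/
theorem legendre_involutive
    (m r : ℕ) (hr : 2 ≤ r) (P Q : MvPolynomial (Fin m) ℂ)
    (hP : P.IsHomogeneous r) (hQ : Q.IsHomogeneous r)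
    (hHess : hessDet m P ≠ 0)
    (hLeg : ∀ w : Fin m → ℂ, eval (gradMap m P w) Q = (eval w P) ^ (r - 1)) :
    ∀ y : Fin m → ℂ, eval (gradMap m Q y) P = (eval y Q) ^ (r - 1) := by
  obtain ⟨k, rfl⟩ := Nat.exists_eq_add_of_le' hr
  have hLeg' : bind₁ (fun i => pderiv i P) Q = P ^ (k + 1) :=
    MvPolynomial.funext fun w => by rw [eval_bind₁, map_pow]; exact hLeg w
  have hinv := pderiv_comp_grad hP hHess hLeg'
  have hzero : bind₁ (fun i => pderiv i Q) P - Q ^ (k + 1) = 0 := by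
    set F := bind₁ (fun i => pderiv i Q) P - Q ^ (k + 1) with hF
    refine eq_zero_of_bind₁_eq_zero (g := fun i => pderiv i P) hHess (F.totalDegree + 1) F
      (fun s hs => coeff_eq_zero_of_totalDegree_lt ?_) (MvPolynomial.funext fun w => ?_)
    · exact hs
    · rw [hF, map_sub, map_pow, hLeg', map_sub, eval_bind₁, eval_bind₁]
      have h : (fun i => eval (fun i => eval w (pderiv i P)) (pderiv i Q)) =
          fun i => eval w P ^ k * w i := by
        ext i
        rw [← eval_bind₁, hinv, map_mul, map_pow, eval_X]
      rw [h, eval_smul_of_isHomogeneous hP]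
      simp only [map_pow, map_zero]
      ring
  intro y
  have := congrArg (eval y) (sub_eq_zero.1 hzero)
  rwa [eval_bind₁, map_pow] at this
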